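/- Let a = (a₁,…,aₙ) ∈ [1,∞)ⁿ. There exist φ₀, φ, ψ₀, ψ ∈ 𝓢(ℝⁿ) supported in the closed half-space {x ∈ ℝⁿ : xₙ ≥ 0}, with ∫φ₀ dx = 1 = ∫ψ₀ dx and with φ and ψ having vanishing moments of all orders, such that u = Σ_{j=0}^∞ ψ_j * (φ_j * u) in the weak* topology of 𝓢'(ℝⁿ) for every u ∈ 𝓢'(ℝⁿ). Consequently, the kernels k₀ := ψ₀*φ₀ and k := ψ*φ are Schwartz functions supported in {x : xₙ ≥ 0}, ∫k₀ dx = 1, k has vanishing moments of all orders, and u = Σ_{j=0}^∞ k_j * u in 𝓢'(ℝⁿ) for every u ∈ 𝓢'(ℝⁿ). -/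

import Mathlib

open MeasureTheory Filter Topology

noncomputable section

/-- Anisotropic dilation: `θ_0 = θ₀` and `θ_j(x) = 2^{j|a|} θ(2^{ja}x)` for `j ≥ 1`. -/
def anisoDil {m : ℕ} (a : Fin m → ℝ) (θ₀ θ : (Fin m → ℝ) → ℝ) (j : ℕ)
    (x : Fin m → ℝ) : ℝ :=
  if j = 0 then θ₀ x
  else (2:ℝ) ^ ((j:ℝ) * ∑ i, a i) * θ (fun i => (2:ℝ) ^ ((j:ℝ) * a i) * x i)

/-- `θ` has vanishing moments of all orders. -/
def VanishingMoments {m : ℕ} (θ : (Fin m → ℝ) → ℝ) : Prop :=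
  ∀ α : Fin m → ℕ, (∫ x : Fin m → ℝ, (∏ i, x i ^ α i) * θ x) = 0

/-! ### Functions on the line decaying faster than every exponential -/

/-- `B` decays faster than every exponential at `±∞`. -/
def ExpDecay (B : ℝ → ℝ) : Prop :=
  ∀ r : ℝ, ∃ C : ℝ, ∀ s : ℝ, Real.exp (r * s) * |B s| ≤ C

namespace ExpDecay

lemma add {A B : ℝ → ℝ} (hA : ExpDecay A) (hB : ExpDecay B) :
    ExpDecay (fun s => A s + B s) := by
  intro r
  obtain ⟨C, hC⟩ := hA r
  obtain ⟨D, hD⟩ := hB r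
  refine ⟨C + D, fun s => ?_⟩
  calc Real.exp (r * s) * |A s + B s| ≤ Real.exp (r * s) * (|A s| + |B s|) := by
        gcongr; exact abs_add_le _ _
    _ ≤ C + D := by rw [mul_add]; exact add_le_add (hC s) (hD s)

lemma const_mul {B : ℝ → ℝ} (hB : ExpDecay B) (c : ℝ) : ExpDecay (fun s => c * B s) := by
  intro r
  obtain ⟨D, hD⟩ := hB r
  refine ⟨|c| * D, fun s => ?_⟩
  rw [abs_mul, mul_left_comm]
  exact mul_le_mul_of_nonneg_left (hD s) (abs_nonneg c)

lemma exp_mul {B : ℝ → ℝ} (hB : ExpDecay B) (m : ℝ) :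
    ExpDecay (fun s => Real.exp (m * s) * B s) := by
  intro r
  obtain ⟨D, hD⟩ := hB (r + m)
  refine ⟨D, fun s => ?_⟩
  rw [abs_mul, abs_of_pos (Real.exp_pos _), ← mul_assoc, ← Real.exp_add, ← add_mul]
  exact hD s

lemma exists_le_exp_neg_abs {B : ℝ → ℝ} (hB : ExpDecay B) :
    ∃ C : ℝ, ∀ s, |B s| ≤ C * Real.exp (-|s|) := by
  obtain ⟨C, hC⟩ := hB 1
  obtain ⟨D, hD⟩ := hB (-1)
  refine ⟨max C D, fun s => ?_⟩
  rw [Real.exp_neg, ← div_eq_mul_inv, le_div_iff₀ (Real.exp_pos _), mul_comm]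
  rcases abs_cases s with ⟨h, -⟩ | ⟨h, -⟩
  · have := hC s
    rw [h]
    exact le_trans (by simpa using this) (le_max_left _ _)
  · have := hD s
    rw [h]
    exact le_trans (by simpa using this) (le_max_right _ _)

lemma id_mul {B : ℝ → ℝ} (hB : ExpDecay B) : ExpDecay (fun s => s * B s) := by
  intro r
  obtain ⟨C, hC⟩ := (hB.exp_mul r).exists_le_exp_neg_abs
  have hC0 : 0 ≤ C := by simpa using (abs_nonneg _).trans (hC 0)
  refine ⟨C, fun s => ?_⟩
  have h := hC s
  rw [abs_mul, abs_of_pos (Real.exp_pos _)] at h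
  have h1 : |s| * Real.exp (-|s|) ≤ 1 := by
    rw [Real.exp_neg, ← div_eq_mul_inv, div_le_one (Real.exp_pos _)]
    linarith [Real.add_one_le_exp |s|]
  calc Real.exp (r * s) * |s * B s| = |s| * (Real.exp (r * s) * |B s|) := by rw [abs_mul]; ring
    _ ≤ |s| * (C * Real.exp (-|s|)) := by gcongr
    _ = C * (|s| * Real.exp (-|s|)) := by ring
    _ ≤ C * 1 := by gcongr
    _ = C := mul_one C

lemma integrable {B : ℝ → ℝ} (hB : ExpDecay B) (hc : Continuous B) : Integrable B := by
  obtain ⟨C, hC⟩ := hB.exists_le_exp_neg_abs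
  have hi : Integrable (fun s : ℝ => (1 + s ^ 2)⁻¹) := integrable_inv_one_add_sq
  refine (hi.const_mul (2 * C)).mono' hc.aestronglyMeasurable (ae_of_all _ fun s => ?_)
  have hC0 : 0 ≤ C := by simpa using (abs_nonneg _).trans (hC 0)
  rw [Real.norm_eq_abs]
  refine (hC s).trans ?_
  rw [mul_comm 2 C, mul_assoc]
  gcongr
  rw [Real.exp_neg, ← div_eq_mul_inv, inv_eq_one_div, div_le_div_iff₀ (Real.exp_pos _) (by positivity)]
  have := Real.quadratic_le_exp_of_nonneg (abs_nonneg s)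
  rw [sq_abs] at this
  nlinarith [abs_nonneg s]

end ExpDecay

/-- A polynomial is dominated by `exp |s|`. -/
lemma Polynomial.exists_norm_eval_le_exp_abs (p : Polynomial ℂ) :
    ∃ C : ℝ, ∀ s : ℝ, ‖p.eval (s : ℂ)‖ ≤ C * Real.exp |s| := by
  induction p using Polynomial.induction_on' with
  | add p q hp hq =>
    obtain ⟨C, hC⟩ := hp
    obtain ⟨D, hD⟩ := hq
    refine ⟨C + D, fun s => ?_⟩
    rw [Polynomial.eval_add, add_mul]
    exact (norm_add_le _ _).trans (add_le_add (hC s) (hD s))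
  | monomial n a =>
    refine ⟨‖a‖ * n.factorial, fun s => ?_⟩
    have h := Real.pow_div_factorial_le_exp |s| (abs_nonneg s) n
    rw [div_le_iff₀ (by positivity)] at h
    rw [Polynomial.eval_monomial, norm_mul, norm_pow, Complex.norm_real, Real.norm_eq_abs]
    calc ‖a‖ * |s| ^ n ≤ ‖a‖ * (Real.exp |s| * n.factorial) := by gcongr
      _ = _ := by ring

/-- The oscillating Gaussian `exp (-s² + 2πis)`. -/
def complexOscGauss (s : ℝ) : ℂ := Complex.exp (-(s : ℂ) ^ 2 + 2 * Real.pi * Complex.I * s)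

lemma norm_complexOscGauss (s : ℝ) : ‖complexOscGauss s‖ = Real.exp (-s ^ 2) := by
  rw [complexOscGauss, Complex.norm_exp]
  congr 1
  simp [← Complex.ofReal_pow]

lemma hasDerivAt_complexOscGauss (s : ℝ) :
    HasDerivAt complexOscGauss ((2 * Real.pi * Complex.I - 2 * s) * complexOscGauss s) s := by
  have h : HasDerivAt (fun z : ℂ => Complex.exp (-z ^ 2 + 2 * Real.pi * Complex.I * z))
      (Complex.exp (-(s : ℂ) ^ 2 + 2 * Real.pi * Complex.I * s) *
        (-(2 * (s : ℂ)) + 2 * Real.pi * Complex.I)) (s : ℂ) := by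
    refine HasDerivAt.cexp (HasDerivAt.add ?_ ?_)
    · simpa using ((hasDerivAt_id (s : ℂ)).fun_pow 2).fun_neg
    · simpa using (hasDerivAt_id (s : ℂ)).const_mul (2 * Real.pi * Complex.I)
  refine h.comp_ofReal.congr_deriv ?_
  rw [complexOscGauss]
  ring

/-- The derivative, up to the weight, of `p · exp (-s² + 2πis)`. -/
def oscDeriv (p : Polynomial ℂ) : Polynomial ℂ :=
  Polynomial.derivative p +
    (Polynomial.C (2 * Real.pi * Complex.I) - Polynomial.C 2 * Polynomial.X) * p

/-- The imaginary part of a polynomial multiple of the oscillating Gaussian. -/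
def polyOsc (p : Polynomial ℂ) (s : ℝ) : ℝ := (p.eval (s : ℂ) * complexOscGauss s).im

lemma hasDerivAt_polyOsc (p : Polynomial ℂ) (s : ℝ) :
    HasDerivAt (polyOsc p) (polyOsc (oscDeriv p) s) s := by
  have h := ((p.hasDerivAt (s : ℂ)).comp_ofReal).mul (hasDerivAt_complexOscGauss s)
  have h2 := Complex.imCLM.hasFDerivAt.comp_hasDerivAt s h
  refine h2.congr_deriv ?_
  simp only [polyOsc, oscDeriv, Complex.imCLM_apply]
  congr 1
  simp
  ring

lemma expDecay_polyOsc (p : Polynomial ℂ) : ExpDecay (polyOsc p) := by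
  obtain ⟨C, hC⟩ := p.exists_norm_eval_le_exp_abs
  have hC0 : 0 ≤ C := by simpa using (norm_nonneg _).trans (hC 0)
  intro r
  refine ⟨C * Real.exp ((|r| + 1) ^ 2 / 4), fun s => ?_⟩
  have h1 : |polyOsc p s| ≤ C * Real.exp |s| * Real.exp (-s ^ 2) := by
    refine (Complex.abs_im_le_norm _).trans ?_
    rw [norm_mul, norm_complexOscGauss]
    gcongr
    exact hC s
  calc Real.exp (r * s) * |polyOsc p s|
      ≤ Real.exp (r * s) * (C * Real.exp |s| * Real.exp (-s ^ 2)) := by gcongr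
    _ = C * Real.exp (r * s + |s| + -s ^ 2) := by rw [Real.exp_add, Real.exp_add]; ring
    _ ≤ _ := by
      gcongr
      have : r * s ≤ |r| * |s| := by rw [← abs_mul]; exact le_abs_self _
      nlinarith [sq_nonneg (|s| - (|r| + 1) / 2), sq_abs s]

lemma continuous_polyOsc (p : Polynomial ℂ) : Continuous (polyOsc p) :=
  continuous_iff_continuousAt.2 fun s => (hasDerivAt_polyOsc p s).continuousAt

/-- The function `exp (-s²) sin (2πs)`. -/
def oscGauss (s : ℝ) : ℝ := polyOsc 1 s

lemma oscGauss_eq (s : ℝ) : oscGauss s = Real.exp (-s ^ 2) * Real.sin (2 * Real.pi * s) := by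
  rw [oscGauss, polyOsc, complexOscGauss, Polynomial.eval_one, one_mul, Complex.exp_im]
  simp [← Complex.ofReal_pow]

lemma continuous_oscGauss : Continuous oscGauss := continuous_polyOsc 1

lemma expDecay_oscGauss : ExpDecay oscGauss := expDecay_polyOsc 1

lemma integrable_oscGauss : Integrable oscGauss :=
  expDecay_oscGauss.integrable continuous_oscGauss

/-- All exponential moments of `oscGauss` of integer order vanish. -/
lemma integral_exp_mul_oscGauss (k : ℕ) : ∫ s, Real.exp (k * s) * oscGauss s = 0 := by
  have h := integral_sub_left_eq_self (fun s => Real.exp (k * s) * oscGauss s) volume (k : ℝ)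
  have h2 : ∀ s : ℝ, Real.exp (k * (k - s)) * oscGauss (k - s) =
      -(Real.exp (k * s) * oscGauss s) := by
    intro s
    have : Real.sin (2 * Real.pi * (k - s)) = - Real.sin (2 * Real.pi * s) := by
      have := Real.sin_nat_mul_two_pi_sub (2 * Real.pi * s) k
      rw [← this]; ring_nf
    rw [oscGauss_eq, oscGauss_eq, this, ← mul_assoc, ← Real.exp_add, ← mul_assoc, ← Real.exp_add,
      mul_neg]
    ring_nf
  simp_rw [h2, integral_neg] at h
  linarith

/-- The tail integral of `oscGauss`. -/
def oscTail (s : ℝ) : ℝ := ∫ t in Set.Ioi s, oscGauss t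

lemma oscTail_eq_neg (s : ℝ) : oscTail s = -∫ t in Set.Iic s, oscGauss t := by
  have h := intervalIntegral.integral_Iic_add_Ioi (b := s) integrable_oscGauss.integrableOn
    integrable_oscGauss.integrableOn
  have h0 : ∫ t, oscGauss t = 0 := by simpa using integral_exp_mul_oscGauss 0
  rw [oscTail]
  linarith

lemma hasDerivAt_oscTail (s : ℝ) : HasDerivAt oscTail (-oscGauss s) s := by
  have h : ∀ x, oscTail x = oscTail 0 - ∫ t in (0 : ℝ)..x, oscGauss t := by
    intro x
    rw [oscTail_eq_neg, oscTail_eq_neg, ← intervalIntegral.integral_Iic_sub_Iic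
      integrable_oscGauss.integrableOn integrable_oscGauss.integrableOn]
    ring
  rw [funext h]
  exact (intervalIntegral.integral_hasDerivAt_right (continuous_oscGauss.intervalIntegrable _ _)
    (continuous_oscGauss.stronglyMeasurableAtFilter _ _) continuous_oscGauss.continuousAt).const_sub _

lemma continuous_oscTail : Continuous oscTail :=
  continuous_iff_continuousAt.2 fun s => (hasDerivAt_oscTail s).continuousAt

lemma expDecay_oscTail : ExpDecay oscTail := by
  intro r
  have hi : Integrable (fun t => Real.exp (r * t) * oscGauss t) :=
    (expDecay_oscGauss.exp_mul r).integrable (by have := continuous_oscGauss; fun_prop)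
  have key : ∀ (s : ℝ) (A : Set ℝ), MeasurableSet A → (∀ t ∈ A, r * s ≤ r * t) →
      Real.exp (r * s) * |∫ t in A, oscGauss t| ≤
        ∫ t, ‖Real.exp (r * t) * oscGauss t‖ := by
    intro s A hA hle
    calc Real.exp (r * s) * |∫ t in A, oscGauss t|
        = ‖∫ t in A, Real.exp (r * s) * oscGauss t‖ := by
          rw [integral_const_mul, norm_mul, Real.norm_eq_abs, Real.norm_eq_abs,
            abs_of_pos (Real.exp_pos _)]
      _ ≤ ∫ t in A, ‖Real.exp (r * s) * oscGauss t‖ := norm_integral_le_integral_norm _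
      _ ≤ ∫ t in A, ‖Real.exp (r * t) * oscGauss t‖ := by
          refine setIntegral_mono_on (integrable_oscGauss.const_mul _).norm.integrableOn
            hi.norm.integrableOn hA fun t ht => ?_
          simp only [norm_mul, Real.norm_eq_abs, Real.abs_exp]
          exact mul_le_mul_of_nonneg_right (Real.exp_le_exp.2 (hle t ht)) (abs_nonneg _)
      _ ≤ _ := setIntegral_le_integral hi.norm (ae_of_all _ fun t => norm_nonneg _)
  refine ⟨∫ t, ‖Real.exp (r * t) * oscGauss t‖, fun s => ?_⟩
  rcases le_total 0 r with hr | hr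
  · exact key s (Set.Ioi s) measurableSet_Ioi fun t ht =>
      mul_le_mul_of_nonneg_left (le_of_lt ht) hr
  · rw [oscTail_eq_neg, abs_neg]
    exact key s (Set.Iic s) measurableSet_Iic fun t ht =>
      mul_le_mul_of_nonpos_left ht hr

/-- The positive exponential moments of `oscTail` of integer order vanish. -/
lemma integral_exp_mul_oscTail {k : ℕ} (hk : k ≠ 0) :
    ∫ s, Real.exp (k * s) * oscTail s = 0 := by
  have hk' : (k : ℝ) ≠ 0 := by exact_mod_cast hk
  have hT : Integrable (fun s => Real.exp (k * s) * oscTail s) :=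
    (expDecay_oscTail.exp_mul k).integrable (by have := continuous_oscTail; fun_prop)
  have hG : Integrable (fun s => Real.exp (k * s) * oscGauss s) :=
    (expDecay_oscGauss.exp_mul k).integrable (by have := continuous_oscGauss; fun_prop)
  have hd : ∀ s, HasDerivAt (fun s => Real.exp (k * s) * oscTail s)
      (k * (Real.exp (k * s) * oscTail s) - Real.exp (k * s) * oscGauss s) s := by
    intro s
    have h1 : HasDerivAt (fun s : ℝ => Real.exp (k * s)) (Real.exp (k * s) * k) s := by
      simpa using ((hasDerivAt_id s).const_mul (k : ℝ)).exp
    refine (h1.mul (hasDerivAt_oscTail s)).congr_deriv ?_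
    ring
  have h := integral_eq_zero_of_hasDerivAt_of_integrable hd ((hT.const_mul _).sub hG) hT
  rw [integral_sub (hT.const_mul _) hG, integral_exp_mul_oscGauss, integral_const_mul] at h
  simpa [hk'] using h

lemma integral_oscTail_ne_zero : ∫ s, oscTail s ≠ 0 := by
  have hT : Integrable oscTail := expDecay_oscTail.integrable continuous_oscTail
  have hsT : Integrable (fun s => s * oscTail s) :=
    expDecay_oscTail.id_mul.integrable (by have := continuous_oscTail; fun_prop)
  have hsG : Integrable (fun s => s * oscGauss s) :=
    expDecay_oscGauss.id_mul.integrable (by have := continuous_oscGauss; fun_prop)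
  have h1 : ∫ s, (oscTail s - s * oscGauss s) = 0 := by
    refine integral_eq_zero_of_hasDerivAt_of_integrable (f := fun s => s * oscTail s)
      (fun s => ?_) (hT.sub hsG) hsT
    refine ((hasDerivAt_id s).mul (hasDerivAt_oscTail s)).congr_deriv ?_
    simp
    ring
  have hgI : Integrable (fun s : ℝ => Complex.exp (Complex.I * (2 * Real.pi) * s) *
      Complex.exp (-1 * (s : ℂ) ^ 2)) := by
    have := integrable_cexp_quadratic (b := 1) (by simp) (Complex.I * (2 * Real.pi)) 0
    refine this.congr (ae_of_all _ fun s => ?_)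
    simp only
    rw [← Complex.exp_add]
    ring_nf
  have hre : ∀ s : ℝ, (Complex.exp (Complex.I * (2 * Real.pi) * s) *
      Complex.exp (-1 * (s : ℂ) ^ 2)).re = Real.exp (-s ^ 2) * Real.cos (2 * Real.pi * s) := by
    intro s
    rw [← Complex.exp_add, Complex.exp_re]
    simp [← Complex.ofReal_pow]
  have hcosI : Integrable (fun s : ℝ => Real.exp (-s ^ 2) * Real.cos (2 * Real.pi * s)) := by
    simp_rw [← hre]
    exact hgI.re
  have h2 : ∫ s, (s * oscGauss s - Real.pi * (Real.exp (-s ^ 2) * Real.cos (2 * Real.pi * s)))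
      = 0 := by
    refine integral_eq_zero_of_hasDerivAt_of_integrable (f := fun s => (-1 / 2) * oscGauss s)
      (fun s => ?_) (hsG.sub (hcosI.const_mul _)) (integrable_oscGauss.const_mul _)
    have e1 : HasDerivAt (fun s : ℝ => Real.exp (-s ^ 2)) (Real.exp (-s ^ 2) * (-(2 * s))) s := by
      simpa using ((hasDerivAt_id s).pow 2).neg.exp
    have e2 : HasDerivAt (fun s : ℝ => Real.sin (2 * Real.pi * s))
        (Real.cos (2 * Real.pi * s) * (2 * Real.pi)) s := by
      simpa using ((hasDerivAt_id s).const_mul (2 * Real.pi)).sin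
    rw [funext oscGauss_eq]
    refine ((e1.mul e2).const_mul (-1 / 2)).congr_deriv ?_
    ring
  rw [integral_sub hT hsG] at h1
  rw [integral_sub hsG (hcosI.const_mul _), integral_const_mul] at h2
  have h3 : ∫ s : ℝ, Real.exp (-s ^ 2) * Real.cos (2 * Real.pi * s) ≠ 0 := by
    have hf := fourierIntegral_gaussian (b := 1) (by simp) (2 * Real.pi)
    have hval : ((Real.pi / 1 : ℂ) ^ (1 / 2 : ℂ) * Complex.exp (-(2 * Real.pi) ^ 2 / (4 * 1))) =
        ((Real.pi ^ (1 / 2 : ℝ) * Real.exp (-(2 * Real.pi) ^ 2 / 4) : ℝ) : ℂ) := by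
      rw [Complex.ofReal_mul, Complex.ofReal_cpow Real.pi_pos.le, Complex.ofReal_exp]
      push_cast
      simp
    have hr : (∫ s : ℝ, Complex.exp (Complex.I * (2 * Real.pi) * s) *
        Complex.exp (-1 * (s : ℂ) ^ 2)).re =
        ∫ s : ℝ, Real.exp (-s ^ 2) * Real.cos (2 * Real.pi * s) := by
      simp_rw [← hre]
      exact (integral_re hgI).symm
    rw [← hr, hf, hval, Complex.ofReal_re]
    have := Real.pi_pos
    positivity
  have : ∫ s, oscTail s = Real.pi * ∫ s : ℝ, Real.exp (-s ^ 2) * Real.cos (2 * Real.pi * s) := by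
    linarith
  rw [this]
  exact mul_ne_zero Real.pi_ne_zero h3

/-- The function `B ∘ log` on `(0, ∞)`, extended by zero. -/
def flatLog (B : ℝ → ℝ) (x : ℝ) : ℝ := if 0 < x then B (Real.log x) else 0

lemma ExpDecay.exists_pow_mul_flatLog_le {B : ℝ → ℝ} (hB : ExpDecay B) (k : ℕ) :
    ∃ C, ∀ x, |x| ^ k * |flatLog B x| ≤ C := by
  obtain ⟨C, hC⟩ := hB k
  have hC0 : 0 ≤ C := le_trans (by positivity) (hC 0)
  refine ⟨C, fun x => ?_⟩
  rw [flatLog]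
  split_ifs with hx
  · have h := hC (Real.log x)
    rwa [Real.exp_nat_mul, Real.exp_log hx, ← abs_of_pos hx, Real.log_abs] at h
  · simpa using hC0

lemma ExpDecay.exists_flatLog_le_sq {B : ℝ → ℝ} (hB : ExpDecay B) :
    ∃ C, ∀ x, |flatLog B x| ≤ C * x ^ 2 := by
  obtain ⟨C, hC⟩ := hB (-(2 : ℕ))
  have hC0 : 0 ≤ C := le_trans (by positivity) (hC 0)
  refine ⟨C, fun x => ?_⟩
  rw [flatLog]
  split_ifs with hx
  · have h := hC (Real.log x)
    rw [neg_mul, Real.exp_neg, Real.exp_nat_mul, Real.exp_log hx] at h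
    rwa [inv_mul_le_iff₀ (by positivity), mul_comm] at h
  · simpa using mul_nonneg hC0 (sq_nonneg x)

lemma ExpDecay.hasDerivAt_flatLog {B B' : ℝ → ℝ} (hB : ExpDecay B)
    (hd : ∀ s, HasDerivAt B (B' s) s) (x : ℝ) :
    HasDerivAt (flatLog B) (flatLog (fun s => Real.exp (-s) * B' s) x) x := by
  rcases lt_trichotomy x 0 with hx | rfl | hx
  · have h0 : flatLog (fun s => Real.exp (-s) * B' s) x = 0 := if_neg hx.not_gt
    rw [h0]
    refine (hasDerivAt_const x (0 : ℝ)).congr_of_eventuallyEq ?_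
    filter_upwards [eventually_lt_nhds hx] with y hy
    exact if_neg hy.not_gt
  · have h0 : flatLog (fun s => Real.exp (-s) * B' s) 0 = 0 := if_neg (lt_irrefl _)
    have h1 : flatLog B 0 = 0 := if_neg (lt_irrefl _)
    obtain ⟨C, hC⟩ := hB.exists_flatLog_le_sq
    rw [h0, hasDerivAt_iff_isLittleO]
    simp only [h1, sub_zero, smul_zero]
    have hO : (flatLog B) =O[𝓝 0] fun x : ℝ => x ^ 2 :=
      Asymptotics.IsBigO.of_bound C (Eventually.of_forall fun y => by
        simpa using hC y)
    refine hO.trans_isLittleO ?_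
    simpa using Asymptotics.isLittleO_pow_pow (𝕜 := ℝ) (m := 1) (n := 2) (by norm_num)
  · have h0 : flatLog (fun s => Real.exp (-s) * B' s) x = B' (Real.log x) * x⁻¹ := by
      rw [flatLog, if_pos hx, Real.exp_neg, Real.exp_log hx, mul_comm]
    rw [h0]
    refine ((hd (Real.log x)).comp x (Real.hasDerivAt_log hx.ne')).congr_of_eventuallyEq ?_
    filter_upwards [eventually_gt_nhds hx] with y hy
    exact if_pos hy

/-- A family of rapidly decreasing functions that is stable under differentiation consists of
Schwartz functions. -/
lemma exists_schwartzMap_of_family {ι : Type*} (g : ι → ℝ → ℝ) (d : ι → ι)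
    (hd : ∀ i x, HasDerivAt (g i) (g (d i) x) x)
    (hb : ∀ i k, ∃ C, ∀ x, |x| ^ k * |g i x| ≤ C) (i : ι) :
    ∃ f : SchwartzMap ℝ ℝ, ⇑f = g i := by
  have hit : ∀ n, iteratedDeriv n (g i) = g (d^[n] i) := by
    intro n
    induction n with
    | zero => simp
    | succ n ih =>
      rw [iteratedDeriv_succ, ih, Function.iterate_succ_apply']
      exact funext fun x => (hd _ x).deriv
  have hs : ContDiff ℝ (⊤ : ℕ∞) (g i) := by
    refine contDiff_of_differentiable_iteratedDeriv fun m _ => ?_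
    rw [hit]
    exact fun x => (hd _ x).differentiableAt
  refine ⟨⟨g i, hs, fun k n => ?_⟩, rfl⟩
  obtain ⟨C, hC⟩ := hb (d^[n] i) k
  refine ⟨C, fun x => ?_⟩
  rw [norm_iteratedFDeriv_eq_norm_iteratedDeriv, hit]
  exact hC x

/-- There is a one-dimensional Schwartz function supported in `[0, ∞)` having the same moments as
the Dirac mass at the origin. -/
lemma exists_schwartzMap_dirac_moments :
    ∃ g : SchwartzMap ℝ ℝ, (∀ x ≤ 0, g x = 0) ∧
      ∀ k : ℕ, ∫ x, x ^ k * g x = if k = 0 then 1 else 0 := by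
  let B : ℝ × Polynomial ℂ × ℝ → ℝ → ℝ := fun i s =>
    Real.exp (i.2.2 * s) * (i.1 * oscTail s + polyOsc i.2.1 s)
  have hB : ∀ i, ExpDecay (B i) := fun i =>
    ((expDecay_oscTail.const_mul i.1).add (expDecay_polyOsc i.2.1)).exp_mul i.2.2
  let d : ℝ × Polynomial ℂ × ℝ → ℝ × Polynomial ℂ × ℝ := fun i =>
    (i.2.2 * i.1, Polynomial.C (i.2.2 : ℂ) * i.2.1 + oscDeriv i.2.1 - Polynomial.C (i.1 : ℂ),
      i.2.2 - 1)
  have hd : ∀ i x, HasDerivAt (flatLog (B i)) (flatLog (B (d i)) x) x := by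
    intro i x
    have h1 : ∀ s, HasDerivAt (B i) (Real.exp s * B (d i) s) s := by
      intro s
      have e1 : HasDerivAt (fun s : ℝ => Real.exp (i.2.2 * s))
          (Real.exp (i.2.2 * s) * i.2.2) s := by
        simpa using ((hasDerivAt_id s).const_mul i.2.2).exp
      refine (e1.mul (((hasDerivAt_oscTail s).const_mul i.1).add
        (hasDerivAt_polyOsc i.2.1 s))).congr_deriv ?_
      have e2 : polyOsc (d i).2.1 s =
          i.2.2 * polyOsc i.2.1 s + polyOsc (oscDeriv i.2.1) s - i.1 * oscGauss s := by
        simp only [d, polyOsc, oscGauss, Polynomial.eval_add, Polynomial.eval_sub,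
          Polynomial.eval_mul, Polynomial.eval_C, Polynomial.eval_one, add_mul, sub_mul,
          Complex.add_im, Complex.sub_im, mul_assoc, Complex.im_ofReal_mul, one_mul]
      have e3 : Real.exp s * Real.exp ((d i).2.2 * s) = Real.exp (i.2.2 * s) := by
        rw [← Real.exp_add]; congr 1; simp only [d]; ring
      simp only [B]
      rw [← mul_assoc, e3, e2]
      simp only [d, Pi.add_apply]
      ring
    refine ((hB i).hasDerivAt_flatLog h1 x).congr_deriv ?_
    congr 1
    funext s
    rw [← mul_assoc, ← Real.exp_add]
    simp
  obtain ⟨f, hf⟩ := exists_schwartzMap_of_family (fun i => flatLog (B i)) d hd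
    (fun i k => (hB i).exists_pow_mul_flatLog_le k) (1, 0, -1)
  have hmom : ∀ k : ℕ, ∫ x, x ^ k * f x = ∫ s, Real.exp (k * s) * oscTail s := by
    intro k
    have h1 : ∀ x, x ^ k * f x = (Set.Ioi (0 : ℝ)).indicator (fun x => x ^ k * f x) x := by
      intro x
      by_cases hx : 0 < x
      · rw [Set.indicator_of_mem (Set.mem_Ioi.2 hx)]
      · rw [Set.indicator_of_notMem (by simpa using hx), hf, flatLog, if_neg hx, mul_zero]
    have h2 := integral_image_eq_integral_abs_deriv_smul MeasurableSet.univ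
      (fun x _ => (Real.hasDerivAt_exp x).hasDerivWithinAt) Real.exp_injective.injOn
      (fun x => x ^ k * f x)
    rw [Set.image_univ, Real.range_exp, setIntegral_univ] at h2
    rw [integral_congr_ae (ae_of_all _ h1), integral_indicator measurableSet_Ioi, h2]
    refine integral_congr_ae (ae_of_all _ fun s => ?_)
    simp only [hf, flatLog, Real.exp_pos, if_true, Real.log_exp, B, smul_eq_mul, Real.abs_exp,
      Real.exp_nat_mul, neg_mul, one_mul, Real.exp_neg]
    have : polyOsc 0 s = 0 := by simp [polyOsc]
    rw [this]
    field_simp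
    ring
  refine ⟨(∫ s, oscTail s)⁻¹ • f, fun x hx => ?_, fun k => ?_⟩
  · simp [hf, flatLog, hx.not_gt]
  · have h : ∀ x, x ^ k * ((∫ s, oscTail s)⁻¹ • f) x =
        (∫ s, oscTail s)⁻¹ * (x ^ k * f x) := by
      intro x
      simp only [smul_apply, smul_eq_mul]
      ring
    simp_rw [h]
    rw [integral_const_mul, hmom]
    split_ifs with hk
    · subst hk
      simpa using inv_mul_cancel₀ integral_oscTail_ne_zero
    · rw [integral_exp_mul_oscTail hk, mul_zero]

/-! ### Tensor powers of Schwartz functions -/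

lemma SchwartzMap.exists_one_add_pow_mul_iteratedFDeriv_le {E F : Type*} [NormedAddCommGroup E]
    [NormedSpace ℝ E] [NormedAddCommGroup F] [NormedSpace ℝ F] (f : SchwartzMap E F) (k n : ℕ) :
    ∃ C : ℝ, 0 ≤ C ∧ ∀ x, (1 + ‖x‖) ^ k * ‖iteratedFDeriv ℝ n f x‖ ≤ C :=
  ⟨2 ^ k * (Finset.Iic (k, n)).sup (fun m => SchwartzMap.seminorm ℝ m.1 m.2) f,
    mul_nonneg (by positivity) (apply_nonneg _ _),
    SchwartzMap.one_add_le_sup_seminorm_apply (𝕜 := ℝ) (m := (k, n)) le_rfl le_rfl f⟩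

lemma pi_norm_le_prod_one_add {m : ℕ} (x : Fin m → ℝ) : ‖x‖ ≤ ∏ i, (1 + ‖x i‖) := by
  have h1 : ∀ i, 1 ≤ 1 + ‖x i‖ := fun i => le_add_of_nonneg_right (norm_nonneg _)
  refine (pi_norm_le_iff_of_nonneg (Finset.prod_nonneg fun i _ => by positivity)).2 fun i => ?_
  calc ‖x i‖ ≤ 1 + ‖x i‖ := by linarith
    _ = ∏ j ∈ {i}, (1 + ‖x j‖) := by simp
    _ ≤ ∏ j, (1 + ‖x j‖) := Finset.prod_le_prod_of_subset_of_one_le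
        (Finset.subset_univ _) (fun i _ => by positivity) (fun j _ _ => h1 j)

lemma norm_iteratedFDeriv_comp_proj_le {m : ℕ} (g : SchwartzMap ℝ ℝ) (i : Fin m) (n : ℕ)
    (x : Fin m → ℝ) :
    ‖iteratedFDeriv ℝ n (fun x : Fin m → ℝ => g (x i)) x‖ ≤ ‖iteratedFDeriv ℝ n g (x i)‖ := by
  have h := (ContinuousLinearMap.proj (R := ℝ) (φ := fun _ : Fin m => ℝ) i).iteratedFDeriv_comp_right
    (g.smooth n) x (i := n) le_rfl
  have hp : ‖ContinuousLinearMap.proj (R := ℝ) (φ := fun _ : Fin m => ℝ) i‖ ≤ 1 :=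
    ContinuousLinearMap.opNorm_le_bound _ zero_le_one fun y => by
      simpa using norm_le_pi_norm y i
  change ‖iteratedFDeriv ℝ n (g ∘ (ContinuousLinearMap.proj (R := ℝ)
    (φ := fun _ : Fin m => ℝ) i)) x‖ ≤ _
  rw [h]
  refine (ContinuousMultilinearMap.norm_compContinuousLinearMap_le _ _).trans ?_
  refine mul_le_of_le_one_right (norm_nonneg _) ?_
  exact Finset.prod_le_one (fun _ _ => norm_nonneg _) fun _ _ => hp

/-- The tensor power `x ↦ ∏ i, g (x i)` of a Schwartz function on the line. -/
def SchwartzMap.tensorPower (m : ℕ) (g : SchwartzMap ℝ ℝ) : SchwartzMap (Fin m → ℝ) ℝ where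
  toFun x := ∏ i, g (x i)
  smooth' := contDiff_prod fun i _ => (g.smooth _).comp (contDiff_apply ℝ ℝ i)
  decay' k n := by
    choose C hC0 hC using fun j => g.exists_one_add_pow_mul_iteratedFDeriv_le k j
    refine ⟨∑ p ∈ (Finset.univ : Finset (Fin m)).sym n,
      (p : Multiset (Fin m)).countPerms * ∏ i, C ((p : Multiset (Fin m)).count i), fun x => ?_⟩
    have h := norm_iteratedFDeriv_prod_le (𝕜 := ℝ) (u := Finset.univ) (N := n)
      (f := fun (i : Fin m) (x : Fin m → ℝ) => g (x i))
      (fun i _ => (g.smooth n).comp (contDiff_apply ℝ ℝ i)) (x := x) (n := n) le_rfl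
    refine (mul_le_mul_of_nonneg_left h (by positivity)).trans ?_
    rw [Finset.mul_sum]
    refine Finset.sum_le_sum fun p _ => ?_
    rw [mul_left_comm]
    refine mul_le_mul_of_nonneg_left ?_ (by positivity)
    calc ‖x‖ ^ k * ∏ i, ‖iteratedFDeriv ℝ ((p : Multiset (Fin m)).count i)
            (fun x : Fin m → ℝ => g (x i)) x‖
        ≤ (∏ i, (1 + ‖x i‖)) ^ k * ∏ i, ‖iteratedFDeriv ℝ ((p : Multiset (Fin m)).count i)
            g (x i)‖ := by
          refine mul_le_mul (pow_le_pow_left₀ (norm_nonneg _) (pi_norm_le_prod_one_add x) k)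
            (Finset.prod_le_prod (fun _ _ => norm_nonneg _)
              fun i _ => norm_iteratedFDeriv_comp_proj_le g i _ x)
            (Finset.prod_nonneg fun _ _ => norm_nonneg _) (by positivity)
      _ = ∏ i, (1 + ‖x i‖) ^ k * ‖iteratedFDeriv ℝ ((p : Multiset (Fin m)).count i)
            g (x i)‖ := by rw [Finset.prod_mul_distrib, Finset.prod_pow]
      _ ≤ ∏ i, C ((p : Multiset (Fin m)).count i) :=
          Finset.prod_le_prod (fun _ _ => by positivity) fun i _ => hC _ (x i)

/-! ### Averages of translates of Schwartz functions -/

section Average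

variable {m : ℕ}

lemma SchwartzMap.integrable_one_add_pow_mul (K : SchwartzMap (Fin m → ℝ) ℝ) (d : ℕ) :
    Integrable (fun w => (1 + ‖w‖) ^ d * ‖K w‖) := by
  have h := ((K.integrable (μ := volume)).norm.add (K.integrable_pow_mul volume d)).const_mul
    ((2 : ℝ) ^ (d - 1))
  refine h.mono' (by have := K.continuous; fun_prop) (ae_of_all _ fun w => ?_)
  rw [Real.norm_of_nonneg (by positivity)]
  calc (1 + ‖w‖) ^ d * ‖K w‖ ≤ (2 ^ (d - 1) * (1 ^ d + ‖w‖ ^ d)) * ‖K w‖ := by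
        gcongr
        exact add_pow_le zero_le_one (norm_nonneg _) d
    _ = _ := by simp only [Pi.add_apply, one_pow]; ring

lemma norm_le_one_add_mul_one_add {E : Type*} [SeminormedAddCommGroup E] (x v : E) :
    ‖x‖ ≤ (1 + ‖x + v‖) * (1 + ‖v‖) := by
  have h : ‖x‖ ≤ ‖x + v‖ + ‖v‖ := by simpa using norm_sub_le (x + v) v
  nlinarith [norm_nonneg (x + v), norm_nonneg v, mul_nonneg (norm_nonneg (x + v)) (norm_nonneg v)]

variable {F : Type*} [NormedAddCommGroup F] [NormedSpace ℝ F]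

lemma integrable_smul_comp_add {K : (Fin m → ℝ) → ℝ} (hK : Integrable K)
    (L : (Fin m → ℝ) →L[ℝ] (Fin m → ℝ)) {h : (Fin m → ℝ) → F} (hc : Continuous h) {C : ℝ}
    (hb : ∀ x, ‖h x‖ ≤ C) (x : Fin m → ℝ) : Integrable (fun w => K w • h (x + L w)) := by
  have hm : AEStronglyMeasurable (fun w => h (x + L w)) volume :=
    (hc.comp (continuous_const.add L.continuous)).aestronglyMeasurable
  refine (hK.norm.mul_const C).mono' (hK.aestronglyMeasurable.smul hm) (ae_of_all _ fun w => ?_)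
  rw [norm_smul]
  gcongr
  exact hb _

lemma hasFDerivAt_integral_smul_comp_add {K : (Fin m → ℝ) → ℝ} (hK : Integrable K)
    (L : (Fin m → ℝ) →L[ℝ] (Fin m → ℝ)) {h : (Fin m → ℝ) → F} (hd : ContDiff ℝ 1 h) {C D : ℝ}
    (hb : ∀ x, ‖h x‖ ≤ C) (hb' : ∀ x, ‖fderiv ℝ h x‖ ≤ D) (x : Fin m → ℝ) :
    HasFDerivAt (fun x => ∫ w, K w • h (x + L w)) (∫ w, K w • fderiv ℝ h (x + L w)) x := by
  refine hasFDerivAt_integral_of_dominated_of_fderiv_le (s := Set.univ)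
    (F' := fun x w => K w • fderiv ℝ h (x + L w)) (bound := fun w => ‖K w‖ * D) univ_mem
    (Eventually.of_forall fun y =>
      (integrable_smul_comp_add hK L hd.continuous hb y).aestronglyMeasurable)
    (integrable_smul_comp_add hK L hd.continuous hb x)
    (integrable_smul_comp_add hK L (hd.continuous_fderiv one_ne_zero) hb' x).aestronglyMeasurable
    (ae_of_all _ fun w y _ => ?_) (hK.norm.mul_const D) (ae_of_all _ fun w y _ => ?_)
  · rw [norm_smul]
    gcongr
    exact hb' _
  · have h1 : HasFDerivAt h (fderiv ℝ h (y + L w)) (y + L w) :=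
      (hd.differentiable one_ne_zero _).hasFDerivAt
    exact ((hasFDerivAt_comp_add_right (L w)).2 h1).const_smul (K w)

lemma fderiv_integral_smul_comp_add_apply {K : (Fin m → ℝ) → ℝ} (hK : Integrable K)
    (L : (Fin m → ℝ) →L[ℝ] (Fin m → ℝ)) {h : (Fin m → ℝ) → F} (hd : ContDiff ℝ 1 h) {C D : ℝ}
    (hb : ∀ x, ‖h x‖ ≤ C) (hb' : ∀ x, ‖fderiv ℝ h x‖ ≤ D) (x v : Fin m → ℝ) :
    fderiv ℝ (fun x => ∫ w, K w • h (x + L w)) x v =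
      ∫ w, K w • fderiv ℝ h (x + L w) v := by
  rw [(hasFDerivAt_integral_smul_comp_add hK L hd hb hb' x).fderiv,
    ContinuousLinearMap.integral_apply
      (integrable_smul_comp_add hK L (hd.continuous_fderiv one_ne_zero) hb' x)]
  rfl

lemma SchwartzMap.exists_norm_iteratedFDeriv_le (η : SchwartzMap (Fin m → ℝ) F) (n : ℕ) :
    ∃ C, ∀ x, ‖iteratedFDeriv ℝ n η x‖ ≤ C := by
  obtain ⟨C, hC⟩ := η.decay 0 n
  exact ⟨C, fun x => by simpa using hC.2 x⟩

lemma SchwartzMap.contDiff_iteratedFDeriv_one (η : SchwartzMap (Fin m → ℝ) F) (n : ℕ) :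
    ContDiff ℝ 1 (iteratedFDeriv ℝ n η) :=
  (η.smooth ⊤).iteratedFDeriv_right (by exact_mod_cast le_top)

lemma SchwartzMap.hasFDerivAt_integral_smul_iteratedFDeriv {K : (Fin m → ℝ) → ℝ}
    (hK : Integrable K) (L : (Fin m → ℝ) →L[ℝ] (Fin m → ℝ)) (η : SchwartzMap (Fin m → ℝ) F)
    (n : ℕ) (x : Fin m → ℝ) :
    HasFDerivAt (fun x => ∫ w, K w • iteratedFDeriv ℝ n η (x + L w))
      (∫ w, K w • fderiv ℝ (iteratedFDeriv ℝ n η) (x + L w)) x := by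
  obtain ⟨C, hC⟩ := η.exists_norm_iteratedFDeriv_le n
  obtain ⟨D, hD⟩ := η.exists_norm_iteratedFDeriv_le (n + 1)
  exact hasFDerivAt_integral_smul_comp_add hK L (η.contDiff_iteratedFDeriv_one n) hC
    (fun x => by rw [norm_fderiv_iteratedFDeriv]; exact hD x) x

lemma SchwartzMap.iteratedFDeriv_integral_smul_comp_add {K : (Fin m → ℝ) → ℝ}
    (hK : Integrable K) (L : (Fin m → ℝ) →L[ℝ] (Fin m → ℝ)) (η : SchwartzMap (Fin m → ℝ) F)
    (n : ℕ) :
    iteratedFDeriv ℝ n (fun x => ∫ w, K w • η (x + L w)) =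
      fun x => ∫ w, K w • iteratedFDeriv ℝ n η (x + L w) := by
  induction n with
  | zero =>
    funext x
    simp only [iteratedFDeriv_zero_eq_comp, Function.comp_apply, ← map_smul]
    exact ((continuousMultilinearCurryFin0 ℝ (Fin m → ℝ) F).symm.toContinuousLinearEquiv
      |>.integral_comp_comm _).symm
  | succ n ih =>
    obtain ⟨C, hC⟩ := η.exists_norm_iteratedFDeriv_le (n + 1)
    have hC' : ∀ x, ‖fderiv ℝ (iteratedFDeriv ℝ n η) x‖ ≤ C := fun x => by
      rw [norm_fderiv_iteratedFDeriv]; exact hC x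
    obtain ⟨D, hD⟩ := η.exists_norm_iteratedFDeriv_le n
    funext x
    ext v
    have h1 := integrable_smul_comp_add hK L
      (((η.contDiff_iteratedFDeriv_one n).continuous_fderiv one_ne_zero).clm_apply
        continuous_const) (fun x => (ContinuousLinearMap.le_opNorm _ (v 0)).trans
          (mul_le_mul_of_nonneg_right (hC' x) (norm_nonneg _))) x
    have h2 : Integrable fun w => K w • iteratedFDeriv ℝ (n + 1) η (x + L w) :=
      integrable_smul_comp_add hK L (η.contDiff_iteratedFDeriv_one (n + 1)).continuous hC x
    rw [iteratedFDeriv_succ_apply_left, ih, fderiv_integral_smul_comp_add_apply hK L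
      (η.contDiff_iteratedFDeriv_one n) hD hC' x (v 0),
      ContinuousMultilinearMap.integral_apply h1, ContinuousMultilinearMap.integral_apply h2]
    rfl

/-- The average `x ↦ ∫ K(w) η(x + L w) dw` of translates of a Schwartz function `η`. -/
def SchwartzMap.average (K : SchwartzMap (Fin m → ℝ) ℝ) (L : (Fin m → ℝ) →L[ℝ] (Fin m → ℝ))
    (η : SchwartzMap (Fin m → ℝ) F) : SchwartzMap (Fin m → ℝ) F where
  toFun x := ∫ w, K w • η (x + L w)
  smooth' := contDiff_of_differentiable_iteratedFDeriv fun n _ => by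
    rw [η.iteratedFDeriv_integral_smul_comp_add K.integrable L n]
    exact fun x =>
      (η.hasFDerivAt_integral_smul_iteratedFDeriv K.integrable L n x).differentiableAt
  decay' k n := by
    obtain ⟨S, hS0, hS⟩ := η.exists_one_add_pow_mul_iteratedFDeriv_le k n
    refine ⟨∫ w, (1 + ‖L‖) ^ k * S * ((1 + ‖w‖) ^ k * ‖K w‖), fun x => ?_⟩
    rw [η.iteratedFDeriv_integral_smul_comp_add K.integrable L n]
    have hx : ‖x‖ ^ k * ‖∫ w, K w • iteratedFDeriv ℝ n η (x + L w)‖ =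
        ‖∫ w, ‖x‖ ^ k • K w • iteratedFDeriv ℝ n η (x + L w)‖ := by
      rw [integral_smul, norm_smul, norm_pow, norm_norm]
    rw [hx]
    refine norm_integral_le_of_norm_le ((K.integrable_one_add_pow_mul k).const_mul _)
      (ae_of_all _ fun w => ?_)
    rw [norm_smul, norm_smul, norm_pow, norm_norm]
    have h1 : ‖x‖ ≤ (1 + ‖x + L w‖) * ((1 + ‖L‖) * (1 + ‖w‖)) := by
      refine (norm_le_one_add_mul_one_add x (L w)).trans ?_
      gcongr
      have := L.le_opNorm w
      nlinarith [norm_nonneg w, norm_nonneg L]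
    calc ‖x‖ ^ k * (‖K w‖ * ‖iteratedFDeriv ℝ n η (x + L w)‖)
        ≤ ((1 + ‖x + L w‖) * ((1 + ‖L‖) * (1 + ‖w‖))) ^ k *
          (‖K w‖ * ‖iteratedFDeriv ℝ n η (x + L w)‖) := by gcongr
      _ = (1 + ‖L‖) ^ k * ((1 + ‖x + L w‖) ^ k * ‖iteratedFDeriv ℝ n η (x + L w)‖) *
          ((1 + ‖w‖) ^ k * ‖K w‖) := by rw [mul_pow, mul_pow]; ring
      _ ≤ (1 + ‖L‖) ^ k * S * ((1 + ‖w‖) ^ k * ‖K w‖) := by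
          gcongr
          exact hS _

lemma SchwartzMap.average_apply (K : SchwartzMap (Fin m → ℝ) ℝ)
    (L : (Fin m → ℝ) →L[ℝ] (Fin m → ℝ)) (η : SchwartzMap (Fin m → ℝ) F) (x : Fin m → ℝ) :
    average K L η x = ∫ w, K w • η (x + L w) := rfl

lemma SchwartzMap.exists_norm_iteratedFDeriv_sub_le (η : SchwartzMap (Fin m → ℝ) F) (k n : ℕ) :
    ∃ S, 0 ≤ S ∧ ∀ x v, ‖x‖ ^ k * ‖iteratedFDeriv ℝ n η (x + v) - iteratedFDeriv ℝ n η x‖ ≤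
      S * (1 + ‖v‖) ^ k * ‖v‖ := by
  obtain ⟨S, hS0, hS⟩ := η.exists_one_add_pow_mul_iteratedFDeriv_le k (n + 1)
  refine ⟨S, hS0, fun x v => ?_⟩
  rcases (pow_nonneg (norm_nonneg x) k).eq_or_lt with h0 | h0
  · rw [← h0, zero_mul]
    positivity
  have hd : ∀ y ∈ segment ℝ x (x + v), HasFDerivWithinAt (iteratedFDeriv ℝ n η)
      (fderiv ℝ (iteratedFDeriv ℝ n η) y) (segment ℝ x (x + v)) y := fun y _ =>
    ((η.contDiff_iteratedFDeriv_one n).differentiable one_ne_zero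
      y).hasFDerivAt.hasFDerivWithinAt
  have hb : ∀ y ∈ segment ℝ x (x + v),
      ‖fderiv ℝ (iteratedFDeriv ℝ n η) y‖ ≤ S * (1 + ‖v‖) ^ k / ‖x‖ ^ k := by
    intro y hy
    rw [segment_eq_image'] at hy
    obtain ⟨t, ⟨ht0, ht1⟩, rfl⟩ := hy
    simp only [add_sub_cancel_left]
    have htv : ‖t • v‖ ≤ ‖v‖ := by
      rw [norm_smul, Real.norm_of_nonneg ht0]
      exact mul_le_of_le_one_left (norm_nonneg _) ht1
    rw [norm_fderiv_iteratedFDeriv, le_div_iff₀' h0]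
    calc ‖x‖ ^ k * ‖iteratedFDeriv ℝ (n + 1) η (x + t • v)‖
        ≤ ((1 + ‖x + t • v‖) * (1 + ‖v‖)) ^ k * ‖iteratedFDeriv ℝ (n + 1) η (x + t • v)‖ := by
          gcongr
          refine (norm_le_one_add_mul_one_add x (t • v)).trans ?_
          gcongr
      _ = ((1 + ‖x + t • v‖) ^ k * ‖iteratedFDeriv ℝ (n + 1) η (x + t • v)‖) *
          (1 + ‖v‖) ^ k := by rw [mul_pow]; ring
      _ ≤ S * (1 + ‖v‖) ^ k := by
          gcongr
          exact hS _
  have := Convex.norm_image_sub_le_of_norm_hasFDerivWithin_le hd hb (convex_segment _ _)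
    (left_mem_segment ℝ x (x + v)) (right_mem_segment ℝ x (x + v))
  rwa [add_sub_cancel_left, div_mul_eq_mul_div, le_div_iff₀' h0] at this

/-- Averages concentrating at a point converge in the Schwartz topology. -/
lemma SchwartzMap.tendsto_average [CompleteSpace F] (K : SchwartzMap (Fin m → ℝ) ℝ)
    (η : SchwartzMap (Fin m → ℝ) F) (L : ℕ → (Fin m → ℝ) →L[ℝ] (Fin m → ℝ))
    (hL : Tendsto (fun N => ‖L N‖) atTop (𝓝 0)) :
    Tendsto (fun N => average K (L N) η) atTop (𝓝 ((∫ w, K w) • η)) := by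
  rw [(schwartz_withSeminorms ℝ (Fin m → ℝ) F).tendsto_nhds_atTop]
  rintro ⟨k, n⟩ ε hε
  obtain ⟨S, hS0, hS⟩ := η.exists_norm_iteratedFDeriv_sub_le k n
  set A := ∫ w, (1 + ‖w‖) ^ (k + 1) * ‖K w‖ with hA
  have hA0 : 0 ≤ A := integral_nonneg fun w => by positivity
  have key : ∀ N, ‖L N‖ ≤ 1 →
      SchwartzMap.seminorm ℝ k n (average K (L N) η - (∫ w, K w) • η) ≤ ‖L N‖ * (S * A) := by
    intro N hN
    refine SchwartzMap.seminorm_le_bound ℝ k n _ (by positivity) fun x => ?_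
    have h1 : iteratedFDeriv ℝ n (⇑(average K (L N) η - (∫ w, K w) • η)) x =
        ∫ w, K w • (iteratedFDeriv ℝ n η (x + L N w) - iteratedFDeriv ℝ n η x) := by
      obtain ⟨C, hC⟩ := η.exists_norm_iteratedFDeriv_le n
      have hs : iteratedFDeriv ℝ n (⇑(average K (L N) η - (∫ w, K w) • η)) x =
          iteratedFDeriv ℝ n (⇑(average K (L N) η)) x -
            (∫ w, K w) • iteratedFDeriv ℝ n η x := by
        rw [← iteratedFDeriv_const_smul_apply ((η.smooth n).contDiffAt)]
        exact iteratedFDeriv_sub_apply ((average K (L N) η).smooth n).contDiffAt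
          (((∫ w, K w) • η).smooth n).contDiffAt
      have hav : ⇑(average K (L N) η) = fun x => ∫ w, K w • η (x + L N w) := rfl
      rw [hs, hav, η.iteratedFDeriv_integral_smul_comp_add K.integrable (L N) n]
      simp_rw [smul_sub]
      rw [integral_sub (integrable_smul_comp_add K.integrable (L N)
        (η.contDiff_iteratedFDeriv_one n).continuous hC x) (K.integrable.smul_const _),
        integral_smul_const]
    have hx : ‖x‖ ^ k * ‖iteratedFDeriv ℝ n (⇑(average K (L N) η - (∫ w, K w) • η)) x‖ =
        ‖∫ w, ‖x‖ ^ k • K w •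
          (iteratedFDeriv ℝ n η (x + L N w) - iteratedFDeriv ℝ n η x)‖ := by
      rw [h1, integral_smul, norm_smul, norm_pow, norm_norm]
    rw [hx, hA, ← integral_const_mul, ← integral_const_mul]
    refine norm_integral_le_of_norm_le
      (((K.integrable_one_add_pow_mul (k + 1)).const_mul _).const_mul _) (ae_of_all _ fun w => ?_)
    rw [norm_smul, norm_smul, norm_pow, norm_norm]
    have hLw : ‖L N w‖ ≤ ‖L N‖ * ‖w‖ := (L N).le_opNorm w
    have hLw' : ‖L N w‖ ≤ ‖w‖ := hLw.trans (mul_le_of_le_one_left (norm_nonneg _) hN)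
    calc ‖x‖ ^ k * (‖K w‖ * ‖iteratedFDeriv ℝ n η (x + L N w) - iteratedFDeriv ℝ n η x‖)
        = ‖K w‖ * (‖x‖ ^ k *
          ‖iteratedFDeriv ℝ n η (x + L N w) - iteratedFDeriv ℝ n η x‖) := by ring
      _ ≤ ‖K w‖ * (S * (1 + ‖L N w‖) ^ k * ‖L N w‖) := 
          mul_le_mul_of_nonneg_left (hS x (L N w)) (norm_nonneg _)
      _ ≤ ‖K w‖ * (S * (1 + ‖w‖) ^ k * (‖L N‖ * (1 + ‖w‖))) := by
          gcongr
          exact hLw.trans (by gcongr; linarith)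
      _ = ‖L N‖ * (S * ((1 + ‖w‖) ^ (k + 1) * ‖K w‖)) := by ring
  have hlim : Tendsto (fun N => ‖L N‖ * (S * A)) atTop (𝓝 0) := by
    simpa using hL.mul_const (S * A)
  have hev : ∀ᶠ N in atTop, ‖L N‖ ≤ 1 ∧ ‖L N‖ * (S * A) < ε :=
    (hL.eventually_le_const one_pos).and (hlim.eventually_lt_const hε)
  obtain ⟨N₀, hN₀⟩ := eventually_atTop.1 hev
  exact ⟨N₀, fun N hN => (key N (hN₀ N hN).1).trans_lt (hN₀ N hN).2⟩

end Average

/-! ### Convolution of Schwartz functions -/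

section Conv

variable {m : ℕ}

/-- The convolution `x ↦ ∫ f(x - y) g(y) dy` of two Schwartz functions. -/
def SchwartzMap.conv (f g : SchwartzMap (Fin m → ℝ) ℝ) : SchwartzMap (Fin m → ℝ) ℝ :=
  average g (-ContinuousLinearMap.id ℝ (Fin m → ℝ)) f

namespace SchwartzMap

lemma conv_apply (f g : SchwartzMap (Fin m → ℝ) ℝ) (x : Fin m → ℝ) :
    conv f g x = ∫ y, f (x - y) * g y := by
  rw [conv, average_apply]
  refine integral_congr_ae (ae_of_all _ fun y => ?_)
  simp [sub_eq_add_neg, mul_comm]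

lemma integrable_conv_integrand (f g : SchwartzMap (Fin m → ℝ) ℝ) (x : Fin m → ℝ) :
    Integrable fun y => f (x - y) * g y := by
  obtain ⟨C, hC⟩ := f.exists_norm_iteratedFDeriv_le 0
  have h := integrable_smul_comp_add (g.integrable (μ := volume))
    (-ContinuousLinearMap.id ℝ (Fin m → ℝ)) f.continuous (C := C) (by simpa using hC) x
  refine h.congr (ae_of_all _ fun y => ?_)
  simp [sub_eq_add_neg, mul_comm]

lemma conv_comm (f g : SchwartzMap (Fin m → ℝ) ℝ) : conv f g = conv g f := by
  ext x
  rw [conv_apply, conv_apply, ← integral_sub_left_eq_self _ volume x]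
  simp only [sub_sub_cancel, mul_comm]

lemma conv_add_left (f f' g : SchwartzMap (Fin m → ℝ) ℝ) :
    conv (f + f') g = conv f g + conv f' g := by
  ext x
  simp only [conv_apply, add_apply, add_mul]
  exact integral_add (integrable_conv_integrand f g x) (integrable_conv_integrand f' g x)

lemma conv_sub_left (f f' g : SchwartzMap (Fin m → ℝ) ℝ) :
    conv (f - f') g = conv f g - conv f' g := by
  ext x
  simp only [conv_apply, sub_apply, sub_mul]
  exact integral_sub (integrable_conv_integrand f g x) (integrable_conv_integrand f' g x)

lemma conv_smul_left (c : ℝ) (f g : SchwartzMap (Fin m → ℝ) ℝ) :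
    conv (c • f) g = c • conv f g := by
  ext x
  simp only [conv_apply, smul_apply, smul_eq_mul, mul_assoc]
  exact integral_const_mul _ _

lemma conv_sub_right (f g g' : SchwartzMap (Fin m → ℝ) ℝ) :
    conv f (g - g') = conv f g - conv f g' := by
  rw [conv_comm, conv_sub_left, conv_comm g, conv_comm g']

lemma integrable_conv_integrand_prod (f g : SchwartzMap (Fin m → ℝ) ℝ) :
    Integrable (fun p : (Fin m → ℝ) × (Fin m → ℝ) => f (p.1 - p.2) * g p.2)
      (volume.prod volume) := by
  simpa [mul_comm] using (g.integrable (μ := volume)).convolution_integrand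
    (ContinuousLinearMap.mul ℝ ℝ) (f.integrable (μ := volume))

lemma conv_assoc (f g h : SchwartzMap (Fin m → ℝ) ℝ) :
    conv (conv f g) h = conv f (conv g h) := by
  ext x
  obtain ⟨C, hC⟩ := f.exists_norm_iteratedFDeriv_le 0
  have hint : Integrable (Function.uncurry fun y z => f (x - y) * (g (y - z) * h z))
      (volume.prod volume) := by
    refine (integrable_conv_integrand_prod g h).bdd_mul (c := C) (f := fun p => f (x - p.1)) ?_ ?_
    · have := f.continuous
      exact Continuous.aestronglyMeasurable (by fun_prop)
    · exact ae_of_all _ fun p => by simpa using hC (x - p.1)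
  calc conv (conv f g) h x = ∫ z, ∫ y, f (x - z - y) * g y * h z := by
        simp only [conv_apply, integral_mul_const]
    _ = ∫ z, ∫ y, f (x - y) * (g (y - z) * h z) := by
        refine integral_congr_ae (ae_of_all _ fun z => ?_)
        dsimp only
        rw [← integral_sub_right_eq_self _ z]
        simp only [sub_sub, add_sub_cancel, mul_assoc]
    _ = ∫ y, ∫ z, f (x - y) * (g (y - z) * h z) := (integral_integral_swap hint).symm
    _ = conv f (conv g h) x := by simp only [conv_apply, integral_const_mul]

end SchwartzMap

/-! ### Diagonal dilations -/

/-- The diagonal scaling `x ↦ (2 ^ b i * x i)ᵢ`. -/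
def diagScale (b : Fin m → ℝ) : (Fin m → ℝ) ≃L[ℝ] (Fin m → ℝ) :=
  ContinuousLinearEquiv.piCongrRight fun i => ContinuousLinearEquiv.unitsEquivAut ℝ
    (Units.mk0 ((2 : ℝ) ^ b i) (Real.rpow_pos_of_pos two_pos _).ne')

lemma diagScale_apply (b x : Fin m → ℝ) (i : Fin m) :
    diagScale b x i = 2 ^ b i * x i := by
  simp [diagScale, mul_comm]

lemma diagScale_diagScale (b b' x : Fin m → ℝ) :
    diagScale b (diagScale b' x) = diagScale (b + b') x := by
  ext i
  simp [diagScale_apply, Real.rpow_add two_pos, mul_assoc]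

lemma diagScale_zero (x : Fin m → ℝ) : diagScale 0 x = x := by
  ext i
  simp [diagScale_apply]

lemma diagScale_neg_diagScale (b x : Fin m → ℝ) : diagScale (-b) (diagScale b x) = x := by
  rw [diagScale_diagScale, neg_add_cancel, diagScale_zero]

lemma integral_comp_diagScale (b : Fin m → ℝ) (f : (Fin m → ℝ) → ℝ) :
    2 ^ (∑ i, b i) * ∫ x, f (diagScale b x) = ∫ x, f x := by
  have hdet : (Matrix.diagonal fun i => (2 : ℝ) ^ b i).det = 2 ^ (∑ i, b i) := by
    rw [Matrix.det_diagonal, Real.rpow_sum_of_pos two_pos]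
  have hpos : (0 : ℝ) < 2 ^ (∑ i, b i) := Real.rpow_pos_of_pos two_pos _
  have h := Real.smul_map_diagonal_volume_pi (D := fun i => (2 : ℝ) ^ b i)
    (by rw [hdet]; exact hpos.ne')
  have hfun : ⇑(Matrix.toLin' (Matrix.diagonal fun i => (2 : ℝ) ^ b i)) =
      ⇑(diagScale b).toHomeomorph.toMeasurableEquiv := by
    funext x
    ext i
    simp [diagScale_apply, Matrix.mulVec_diagonal]
  rw [hdet, abs_of_pos hpos, hfun] at h
  conv_rhs => rw [← h]
  rw [integral_smul_measure, integral_map_equiv, ENNReal.toReal_ofReal hpos.le]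
  rfl

/-- The `L¹`-normalised dilation `x ↦ 2 ^ (∑ b i) f (2 ^ b x)`. -/
def SchwartzMap.dilation (b : Fin m → ℝ) :
    SchwartzMap (Fin m → ℝ) ℝ →L[ℝ] SchwartzMap (Fin m → ℝ) ℝ :=
  (2 : ℝ) ^ (∑ i, b i) • compCLMOfContinuousLinearEquiv ℝ (diagScale b)

namespace SchwartzMap

lemma dilation_apply (b : Fin m → ℝ) (f : SchwartzMap (Fin m → ℝ) ℝ) (x : Fin m → ℝ) :
    dilation b f x = 2 ^ (∑ i, b i) * f (diagScale b x) := rfl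

lemma dilation_dilation (b b' : Fin m → ℝ) (f : SchwartzMap (Fin m → ℝ) ℝ) :
    dilation b (dilation b' f) = dilation (b + b') f := by
  ext x
  simp only [dilation_apply, diagScale_diagScale, ← mul_assoc, add_comm b', Pi.add_apply,
    Finset.sum_add_distrib, Real.rpow_add two_pos]

lemma dilation_zero (f : SchwartzMap (Fin m → ℝ) ℝ) : dilation 0 f = f := by
  ext x
  simp [dilation_apply, diagScale_zero]

lemma integral_mul_dilation (b : Fin m → ℝ) (f : SchwartzMap (Fin m → ℝ) ℝ)
    (h : (Fin m → ℝ) → ℝ) :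
    ∫ x, h x * dilation b f x = ∫ x, h (diagScale (-b) x) * f x := by
  rw [← integral_comp_diagScale b fun x => h (diagScale (-b) x) * f x, ← integral_const_mul]
  simp only [diagScale_neg_diagScale, dilation_apply, mul_left_comm]

lemma dilation_conv (b : Fin m → ℝ) (f g : SchwartzMap (Fin m → ℝ) ℝ) :
    dilation b (conv f g) = conv (dilation b f) (dilation b g) := by
  ext x
  rw [conv_apply, integral_mul_dilation b g fun y => dilation b f (x - y), dilation_apply,
    conv_apply, ← integral_const_mul]
  refine integral_congr_ae (ae_of_all _ fun y => ?_)
  have : diagScale b (diagScale (-b) y) = y := by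
    rw [diagScale_diagScale, add_neg_cancel, diagScale_zero]
  simp only [dilation_apply, map_sub, this, mul_assoc]

end SchwartzMap

/-! ### Moments -/

lemma MvPolynomial.eval_bind₁ {σ τ R : Type*} [CommSemiring R] (x : τ → R)
    (q : σ → MvPolynomial τ R) (P : MvPolynomial σ R) :
    MvPolynomial.eval x (MvPolynomial.bind₁ q P) =
      MvPolynomial.eval (fun i => MvPolynomial.eval x (q i)) P :=
  MvPolynomial.eval₂Hom_bind₁ (RingHom.id R) x q P

lemma MvPolynomial.exists_norm_eval_le (P : MvPolynomial (Fin m) ℝ) :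
    ∃ C, 0 ≤ C ∧ ∃ d : ℕ, ∀ x : Fin m → ℝ, ‖MvPolynomial.eval x P‖ ≤ C * (1 + ‖x‖) ^ d := by
  induction P using MvPolynomial.induction_on with
  | C r => exact ⟨‖r‖, norm_nonneg _, 0, fun x => by simp⟩
  | add p q hp hq =>
    obtain ⟨C, hC0, d, hC⟩ := hp
    obtain ⟨C', hC0', d', hC'⟩ := hq
    refine ⟨C + C', add_nonneg hC0 hC0', max d d', fun x => ?_⟩
    have h1 : 1 ≤ 1 + ‖x‖ := by simp
    rw [map_add, add_mul]
    refine (norm_add_le _ _).trans (add_le_add ((hC x).trans ?_) ((hC' x).trans ?_))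
    · gcongr
      exact le_max_left _ _
    · gcongr
      exact le_max_right _ _
  | mul_X p i hp =>
    obtain ⟨C, hC0, d, hC⟩ := hp
    refine ⟨C, hC0, d + 1, fun x => ?_⟩
    rw [map_mul, MvPolynomial.eval_X, norm_mul, pow_succ, ← mul_assoc]
    gcongr
    · exact hC x
    · exact (norm_le_pi_norm x i).trans (by simp)

lemma SchwartzMap.integrable_eval_mul (f : SchwartzMap (Fin m → ℝ) ℝ)
    (P : MvPolynomial (Fin m) ℝ) : Integrable fun x => MvPolynomial.eval x P * f x := by
  obtain ⟨C, hC0, d, hC⟩ := P.exists_norm_eval_le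
  have hc : Continuous fun x => MvPolynomial.eval x P * f x :=
    (MvPolynomial.continuous_eval P).mul f.continuous
  refine ((f.integrable_one_add_pow_mul d).const_mul C).mono' hc.aestronglyMeasurable
    (ae_of_all _ fun x => ?_)
  rw [norm_mul, ← mul_assoc]
  gcongr
  exact hC x

/-- `f` has the moments of `c` times the Dirac mass at the origin. -/
def HasDiracMoments (f : (Fin m → ℝ) → ℝ) (c : ℝ) : Prop :=
  ∀ P : MvPolynomial (Fin m) ℝ, ∫ x, MvPolynomial.eval x P * f x = c * MvPolynomial.eval 0 P

namespace HasDiracMoments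

variable {f g : SchwartzMap (Fin m → ℝ) ℝ} {c d : ℝ}

lemma add (hf : HasDiracMoments f c) (hg : HasDiracMoments g d) :
    HasDiracMoments (f + g : SchwartzMap (Fin m → ℝ) ℝ) (c + d) := fun P => by
  simp only [add_apply, mul_add]
  rw [integral_add (f.integrable_eval_mul P) (g.integrable_eval_mul P), hf P, hg P, add_mul]

lemma sub (hf : HasDiracMoments f c) (hg : HasDiracMoments g d) :
    HasDiracMoments (f - g : SchwartzMap (Fin m → ℝ) ℝ) (c - d) := fun P => by
  simp only [sub_apply, mul_sub]
  rw [integral_sub (f.integrable_eval_mul P) (g.integrable_eval_mul P), hf P, hg P, sub_mul]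

lemma smul (hf : HasDiracMoments f c) (r : ℝ) :
    HasDiracMoments (r • f : SchwartzMap (Fin m → ℝ) ℝ) (r * c) := fun P => by
  simp only [smul_apply, smul_eq_mul, mul_left_comm _ r]
  rw [integral_const_mul, hf P, mul_assoc]

lemma dilation (hf : HasDiracMoments f c) (b : Fin m → ℝ) :
    HasDiracMoments (SchwartzMap.dilation b f) c := fun P => by
  have h : ∀ x, MvPolynomial.eval (diagScale (-b) x) P = MvPolynomial.eval x
      (MvPolynomial.bind₁ (fun i => MvPolynomial.C ((2 : ℝ) ^ (-b i)) * MvPolynomial.X i) P) :=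
    fun x => by
      rw [MvPolynomial.eval_bind₁]
      congr 2
      ext i
      simp [diagScale_apply]
  rw [SchwartzMap.integral_mul_dilation b f fun x => MvPolynomial.eval x P]
  simp only [h]
  rw [hf, ← h, map_zero]

lemma conv (hf : HasDiracMoments f c) (hg : HasDiracMoments g d) :
    HasDiracMoments (SchwartzMap.conv f g) (c * d) := fun P => by
  obtain ⟨C, hC0, k, hC⟩ := P.exists_norm_eval_le
  have hint : Integrable (Function.uncurry fun x y => MvPolynomial.eval x P * (f (x - y) * g y))
      (volume.prod volume) := by
    have h := ((g.integrable_one_add_pow_mul k).convolution_integrand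
      (ContinuousLinearMap.mul ℝ ℝ) (f.integrable_one_add_pow_mul k)).const_mul C
    have hc : Continuous (Function.uncurry fun x y : Fin m → ℝ =>
        MvPolynomial.eval x P * (f (x - y) * g y)) := by
      have h1 := MvPolynomial.continuous_eval P
      have h2 := f.continuous
      have h3 := g.continuous
      exact (h1.comp continuous_fst).mul
        ((h2.comp (continuous_fst.sub continuous_snd)).mul (h3.comp continuous_snd))
    refine h.mono' hc.aestronglyMeasurable (ae_of_all _ ?_)
    rintro ⟨x, y⟩
    simp only [Function.uncurry_apply_pair, norm_mul, ContinuousLinearMap.mul_apply']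
    have hx : 1 + ‖x‖ ≤ (1 + ‖x - y‖) * (1 + ‖y‖) := by
      have h4 : ‖x‖ ≤ ‖x - y‖ + ‖y‖ := by simpa using norm_add_le (x - y) y
      nlinarith [mul_nonneg (norm_nonneg (x - y)) (norm_nonneg y)]
    calc ‖MvPolynomial.eval x P‖ * (‖f (x - y)‖ * ‖g y‖)
        ≤ (C * ((1 + ‖x - y‖) * (1 + ‖y‖)) ^ k) * (‖f (x - y)‖ * ‖g y‖) := by
          gcongr
          exact (hC x).trans (by gcongr)
      _ = C * ((1 + ‖y‖) ^ k * ‖g y‖ * ((1 + ‖x - y‖) ^ k * ‖f (x - y)‖)) := by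
          rw [mul_pow]; ring
  have htr : ∀ x y : Fin m → ℝ, MvPolynomial.eval (x + y) P = MvPolynomial.eval x
      (MvPolynomial.bind₁ (fun i => MvPolynomial.X i + MvPolynomial.C (y i)) P) := fun x y => by
    rw [MvPolynomial.eval_bind₁]
    congr 2
    ext i
    simp
  calc ∫ x, MvPolynomial.eval x P * SchwartzMap.conv f g x
      = ∫ x, ∫ y, MvPolynomial.eval x P * (f (x - y) * g y) := by
        simp only [SchwartzMap.conv_apply, integral_const_mul]
    _ = ∫ y, ∫ x, MvPolynomial.eval x P * (f (x - y) * g y) := integral_integral_swap hint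
    _ = ∫ y, c * (MvPolynomial.eval y P * g y) := by
        refine integral_congr_ae (ae_of_all _ fun y => ?_)
        dsimp only
        rw [← integral_add_right_eq_self _ y]
        simp only [add_sub_cancel_right, htr, ← mul_assoc, integral_mul_const]
        rw [hf, ← htr, zero_add]
    _ = c * d * MvPolynomial.eval 0 P := by rw [integral_const_mul, hg P, mul_assoc]

lemma integral_eq {f : (Fin m → ℝ) → ℝ} (hf : HasDiracMoments f c) : ∫ x, f x = c := by
  simpa using hf 1

end HasDiracMoments

lemma hasDiracMoments_tensorPower {g : SchwartzMap ℝ ℝ}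
    (hg : ∀ k : ℕ, ∫ x, x ^ k * g x = if k = 0 then 1 else 0) :
    HasDiracMoments (SchwartzMap.tensorPower m g) 1 := fun P => by
  induction P using MvPolynomial.induction_on' with
  | monomial s r =>
    have h : ∀ x : Fin m → ℝ, MvPolynomial.eval x (MvPolynomial.monomial s r) *
        SchwartzMap.tensorPower m g x = r * ∏ i, (x i ^ s i * g (x i)) := fun x => by
      rw [MvPolynomial.eval_monomial, Finsupp.prod_fintype _ _ (by simp),
        Finset.prod_mul_distrib, mul_assoc]
      rfl
    simp only [h]
    rw [integral_const_mul, integral_fintype_prod_volume_eq_prod fun i (y : ℝ) => y ^ s i * g y,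
      MvPolynomial.eval_monomial, Finsupp.prod_fintype _ _ (by simp), one_mul]
    simp only [hg, Pi.zero_apply, zero_pow_eq]
  | add p q hp hq =>
    simp only [map_add, add_mul, mul_add]
    rw [integral_add (SchwartzMap.integrable_eval_mul _ p) (SchwartzMap.integrable_eval_mul _ q),
      hp, hq]

end Conv

/-! ### Assembling the kernels -/

lemma HasDiracMoments.vanishingMoments {m : ℕ} {f : (Fin m → ℝ) → ℝ}
    (hf : HasDiracMoments f 0) : VanishingMoments f := fun α => by
  simpa [map_prod] using hf (∏ i, MvPolynomial.X i ^ α i)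

lemma anisoDil_eq {m : ℕ} (a : Fin m → ℝ) (θ₀ θ : SchwartzMap (Fin m → ℝ) ℝ) (j : ℕ) :
    anisoDil a θ₀ θ j = ⇑(if j = 0 then θ₀ else SchwartzMap.dilation ((j : ℝ) • a) θ) := by
  funext x
  split_ifs with hj
  · simp [anisoDil, hj]
  · simp only [anisoDil, hj, if_false, SchwartzMap.dilation_apply, Pi.smul_apply, smul_eq_mul,
      Finset.mul_sum]
    congr 2
    ext i
    simp [diagScale_apply]

lemma integral_anisoDil_mul_anisoDil {m : ℕ} (a : Fin m → ℝ)
    (φ₀ φ ψ₀ ψ : SchwartzMap (Fin m → ℝ) ℝ) (j : ℕ) (x : Fin m → ℝ) :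
    ∫ z, anisoDil a ψ₀ ψ j (x - z) * anisoDil a φ₀ φ j z =
      anisoDil a (SchwartzMap.conv ψ₀ φ₀) (SchwartzMap.conv ψ φ) j x := by
  simp only [anisoDil_eq, ← SchwartzMap.conv_apply]
  split_ifs <;> simp only [SchwartzMap.dilation_conv]

lemma sum_anisoDil {m : ℕ} (a : Fin m → ℝ) (K : SchwartzMap (Fin m → ℝ) ℝ) (N : ℕ)
    (x : Fin m → ℝ) :
    ∑ j ∈ Finset.range (N + 1), anisoDil a K (K - SchwartzMap.dilation (-a) K :
      SchwartzMap (Fin m → ℝ) ℝ) j x = SchwartzMap.dilation ((N : ℝ) • a) K x := by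
  induction N with
  | zero => simp [anisoDil, SchwartzMap.dilation_zero]
  | succ N ih =>
    have h : ((N + 1 : ℕ) : ℝ) • a + -a = (N : ℝ) • a := by
      push_cast
      module
    rw [Finset.sum_range_succ, ih, anisoDil_eq, if_neg N.succ_ne_zero, map_sub,
      SchwartzMap.dilation_dilation, h, sub_apply, add_sub_cancel]

lemma norm_diagScale_le {m : ℕ} {b : Fin m → ℝ} {r : ℝ} (hb : ∀ i, b i ≤ r) :
    ‖(diagScale b : (Fin m → ℝ) →L[ℝ] (Fin m → ℝ))‖ ≤ 2 ^ r := by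
  have hr : (0 : ℝ) ≤ 2 ^ r := by positivity
  refine ContinuousLinearMap.opNorm_le_bound _ hr fun x => ?_
  refine (pi_norm_le_iff_of_nonneg (by positivity)).2 fun i => ?_
  rw [ContinuousLinearEquiv.coe_coe, diagScale_apply, norm_mul,
    Real.norm_of_nonneg (by positivity)]
  gcongr
  exacts [one_le_two, hb i, norm_le_pi_norm x i]

lemma tendsto_sum_anisoDil {m : ℕ} {a : Fin m → ℝ} (ha : ∀ i, 1 ≤ a i)
    {K : SchwartzMap (Fin m → ℝ) ℝ} (hK : ∫ x, K x = 1)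
    (u : SchwartzMap (Fin m → ℝ) ℝ →L[ℝ] ℝ) (η : SchwartzMap (Fin m → ℝ) ℝ)
    (c : ℕ → SchwartzMap (Fin m → ℝ) ℝ)
    (hc : ∀ j x, c j x = ∫ y, anisoDil a K (K - SchwartzMap.dilation (-a) K :
      SchwartzMap (Fin m → ℝ) ℝ) j (y - x) * η y) :
    Tendsto (fun N => ∑ j ∈ Finset.range N, u (c j)) atTop (𝓝 (u η)) := by
  let L : ℕ → (Fin m → ℝ) →L[ℝ] (Fin m → ℝ) := fun N => diagScale (-((N : ℝ) • a))
  have hL : Tendsto (fun N => ‖L N‖) atTop (𝓝 0) := by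
    refine squeeze_zero (fun _ => norm_nonneg _) (fun N => norm_diagScale_le (r := -(N : ℝ))
      fun i => ?_) ?_
    · simpa using le_mul_of_one_le_right (Nat.cast_nonneg N) (ha i)
    · have := tendsto_pow_atTop_nhds_zero_of_lt_one (r := (2 : ℝ)⁻¹) (by norm_num) (by norm_num)
      refine this.congr fun N => ?_
      rw [Real.rpow_neg two_pos.le, Real.rpow_natCast, inv_pow]
  have hint : ∀ j x, Integrable fun y => anisoDil a K (K - SchwartzMap.dilation (-a) K :
      SchwartzMap (Fin m → ℝ) ℝ) j y * η (y + x) := fun j x => by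
    rw [anisoDil_eq]
    obtain ⟨C, hC⟩ := η.exists_norm_iteratedFDeriv_le 0
    simpa [add_comm] using integrable_smul_comp_add (SchwartzMap.integrable (μ := volume) _)
      (ContinuousLinearMap.id ℝ (Fin m → ℝ)) η.continuous (C := C) (by simpa using hC) x
  have hsum : ∀ N, ∑ j ∈ Finset.range (N + 1), c j = SchwartzMap.average K (L N) η := by
    intro N
    ext x
    rw [sum_apply, SchwartzMap.average_apply]
    calc ∑ j ∈ Finset.range (N + 1), c j x
        = ∑ j ∈ Finset.range (N + 1), ∫ y, anisoDil a K (K - SchwartzMap.dilation (-a) K :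
            SchwartzMap (Fin m → ℝ) ℝ) j y * η (y + x) := by
          refine Finset.sum_congr rfl fun j _ => ?_
          rw [hc, ← integral_add_right_eq_self _ x]
          simp only [add_sub_cancel_right]
      _ = ∫ y, η (y + x) * SchwartzMap.dilation ((N : ℝ) • a) K y := by
          rw [← integral_finsetSum _ fun j _ => hint j x]
          simp only [← Finset.sum_mul, sum_anisoDil, mul_comm (η _)]
      _ = ∫ w, K w • η (x + L N w) := by
          rw [SchwartzMap.integral_mul_dilation _ K fun y => η (y + x)]
          simp only [L, smul_eq_mul, mul_comm, add_comm, ContinuousLinearEquiv.coe_coe]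
  rw [← tendsto_add_atTop_iff_nat 1]
  have h := SchwartzMap.tendsto_average K η L hL
  rw [hK, one_smul] at h
  refine ((u.continuous.tendsto η).comp h).congr fun N => ?_
  rw [Function.comp_apply, ← hsum, map_sum]

lemma SchwartzMap.conv_sub_dilation_eq {m : ℕ} (b : Fin m → ℝ)
    (A : SchwartzMap (Fin m → ℝ) ℝ) :
    conv ((3 : ℝ) • (A + dilation b A) - (2 : ℝ) • (conv A A + conv A (dilation b A) +
        conv (dilation b A) (dilation b A))) (A - dilation b A) =
      conv ((3 : ℝ) • A - (2 : ℝ) • conv A A) A -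
        dilation b (conv ((3 : ℝ) • A - (2 : ℝ) • conv A A) A) := by
  have h1 : conv (dilation b A) A = conv A (dilation b A) := conv_comm _ _
  have h2 : conv (conv A (dilation b A)) A = conv (conv A A) (dilation b A) := by
    rw [conv_assoc, h1, conv_assoc]
  have h3 : conv (conv (dilation b A) (dilation b A)) A =
      conv (conv A (dilation b A)) (dilation b A) := by
    rw [conv_assoc, h1, conv_comm, conv_assoc]
  simp only [conv_sub_left, conv_sub_right, conv_add_left, conv_smul_left, dilation_conv,
    map_sub, map_smul, h1, h2, h3]
  module

section Support

variable {m : ℕ} {l : Fin m} {f g : SchwartzMap (Fin m → ℝ) ℝ}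

lemma tsupport_subset_of_eq_zero {f : (Fin m → ℝ) → ℝ} (hf : ∀ x, x l < 0 → f x = 0) :
    tsupport f ⊆ {x | 0 ≤ x l} :=
  closure_minimal (fun x hx => not_lt.1 fun h => hx (hf x h))
    (isClosed_le continuous_const (continuous_apply l))

lemma SchwartzMap.conv_eq_zero (hf : ∀ x, x l < 0 → f x = 0) (hg : ∀ x, x l < 0 → g x = 0) :
    ∀ x, x l < 0 → conv f g x = 0 := fun x hx => by
  rw [conv_apply]
  refine integral_eq_zero_of_ae (ae_of_all _ fun y => ?_)
  rcases lt_or_ge (y l) 0 with hy | hy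
  · simp [hg y hy]
  · simp [hf (x - y) (by rw [Pi.sub_apply]; linarith)]

lemma SchwartzMap.dilation_eq_zero (hf : ∀ x, x l < 0 → f x = 0) (b : Fin m → ℝ) :
    ∀ x, x l < 0 → dilation b f x = 0 := fun x hx => by
  rw [dilation_apply, hf, mul_zero]
  rw [diagScale_apply]
  exact mul_neg_of_pos_of_neg (by positivity) hx

end Support

/-- For any anisotropy `a ∈ [1,∞)ⁿ` there exist
`φ₀, φ, ψ₀, ψ ∈ 𝓢(ℝⁿ)` supported in the closed half-space `{xₙ ≥ 0}`, with
`∫φ₀ = 1 = ∫ψ₀` and `φ, ψ` having vanishing moments of all orders, such that the Calderón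
reproducing formula `u = Σ_j ψ_j * (φ_j * u)` holds weak* for every `u ∈ 𝓢'(ℝⁿ)`.
Consequently the kernels `k₀ = ψ₀*φ₀` and `k = ψ*φ` are Schwartz functions supported in
`{xₙ ≥ 0}`, `∫k₀ = 1`, `k` has vanishing moments of all orders, and `u = Σ_j k_j * u`
in `𝓢'(ℝⁿ)` for every `u ∈ 𝓢'(ℝⁿ)`. -/
theorem exists_localized_means_kernels (n : ℕ) (a : Fin (n+1) → ℝ)
    (ha : ∀ i, 1 ≤ a i) :
    ∃ φ₀ φ ψ₀ ψ k₀ k : SchwartzMap (Fin (n+1) → ℝ) ℝ,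
      tsupport ⇑φ₀ ⊆ {x : Fin (n+1) → ℝ | 0 ≤ x (Fin.last n)} ∧
      tsupport ⇑φ ⊆ {x : Fin (n+1) → ℝ | 0 ≤ x (Fin.last n)} ∧
      tsupport ⇑ψ₀ ⊆ {x : Fin (n+1) → ℝ | 0 ≤ x (Fin.last n)} ∧
      tsupport ⇑ψ ⊆ {x : Fin (n+1) → ℝ | 0 ≤ x (Fin.last n)} ∧
      (∫ x : Fin (n+1) → ℝ, φ₀ x) = 1 ∧ (∫ x : Fin (n+1) → ℝ, ψ₀ x) = 1 ∧
      VanishingMoments ⇑φ ∧ VanishingMoments ⇑ψ ∧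
      -- Calderón reproducing formula `u = Σ_j ψ_j * (φ_j * u)`, weak* in `𝓢'(ℝⁿ)`
      (∀ (u : SchwartzMap (Fin (n+1) → ℝ) ℝ →L[ℝ] ℝ)
        (η : SchwartzMap (Fin (n+1) → ℝ) ℝ)
        (c : ℕ → SchwartzMap (Fin (n+1) → ℝ) ℝ),
        (∀ (j : ℕ) (x : Fin (n+1) → ℝ),
          c j x = ∫ y : Fin (n+1) → ℝ,
            (∫ z : Fin (n+1) → ℝ,
              anisoDil a ⇑ψ₀ ⇑ψ j ((y - x) - z) * anisoDil a ⇑φ₀ ⇑φ j z) * η y) →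
        Tendsto (fun N => ∑ j ∈ Finset.range N, u (c j)) atTop (nhds (u η))) ∧
      -- the kernels `k₀ = ψ₀ * φ₀` and `k = ψ * φ`
      (∀ x : Fin (n+1) → ℝ, k₀ x = ∫ y : Fin (n+1) → ℝ, ψ₀ (x - y) * φ₀ y) ∧
      (∀ x : Fin (n+1) → ℝ, k x = ∫ y : Fin (n+1) → ℝ, ψ (x - y) * φ y) ∧
      tsupport ⇑k₀ ⊆ {x : Fin (n+1) → ℝ | 0 ≤ x (Fin.last n)} ∧
      tsupport ⇑k ⊆ {x : Fin (n+1) → ℝ | 0 ≤ x (Fin.last n)} ∧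
      (∫ x : Fin (n+1) → ℝ, k₀ x) = 1 ∧
      VanishingMoments ⇑k ∧
      -- reproducing formula `u = Σ_j k_j * u`, weak* in `𝓢'(ℝⁿ)`
      (∀ (u : SchwartzMap (Fin (n+1) → ℝ) ℝ →L[ℝ] ℝ)
        (η : SchwartzMap (Fin (n+1) → ℝ) ℝ)
        (c : ℕ → SchwartzMap (Fin (n+1) → ℝ) ℝ),
        (∀ (j : ℕ) (x : Fin (n+1) → ℝ),
          c j x = ∫ y : Fin (n+1) → ℝ, anisoDil a ⇑k₀ ⇑k j (y - x) * η y) →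
        Tendsto (fun N => ∑ j ∈ Finset.range N, u (c j)) atTop (nhds (u η))) := by
  obtain ⟨g, hg0, hgm⟩ := exists_schwartzMap_dirac_moments
  let A := SchwartzMap.tensorPower (n + 1) g
  let B := SchwartzMap.dilation (-a) A
  let ψ₀ : SchwartzMap (Fin (n + 1) → ℝ) ℝ := (3 : ℝ) • A - (2 : ℝ) • SchwartzMap.conv A A
  let ψ : SchwartzMap (Fin (n + 1) → ℝ) ℝ := (3 : ℝ) • (A + B) - (2 : ℝ) •
    (SchwartzMap.conv A A + SchwartzMap.conv A B + SchwartzMap.conv B B)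
  have hk : SchwartzMap.conv ψ (A - B) =
      SchwartzMap.conv ψ₀ A - SchwartzMap.dilation (-a) (SchwartzMap.conv ψ₀ A) :=
    SchwartzMap.conv_sub_dilation_eq (-a) A
  have mA : HasDiracMoments A 1 := hasDiracMoments_tensorPower hgm
  have mB : HasDiracMoments B 1 := mA.dilation _
  have mφ : HasDiracMoments (A - B : SchwartzMap (Fin (n + 1) → ℝ) ℝ) 0 := by
    simpa using mA.sub mB
  have mψ₀ : HasDiracMoments ψ₀ 1 := by
    convert (mA.smul 3).sub ((mA.conv mA).smul 2) using 1
    norm_num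
  have mψ : HasDiracMoments ψ 0 := by
    convert ((mA.add mB).smul 3).sub
      ((((mA.conv mA).add (mA.conv mB)).add (mB.conv mB)).smul 2) using 1
    norm_num
  have mk₀ : HasDiracMoments (SchwartzMap.conv ψ₀ A) 1 := by simpa using mψ₀.conv mA
  have mk : HasDiracMoments (SchwartzMap.conv ψ (A - B)) 0 := by simpa using mψ.conv mφ
  have sA : ∀ x, x (Fin.last n) < 0 → A x = 0 := fun x hx =>
    Finset.prod_eq_zero (Finset.mem_univ (Fin.last n)) (hg0 _ hx.le)
  have sB : ∀ x, x (Fin.last n) < 0 → B x = 0 := SchwartzMap.dilation_eq_zero sA _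
  have sAA := SchwartzMap.conv_eq_zero sA sA
  have sAB := SchwartzMap.conv_eq_zero sA sB
  have sBB := SchwartzMap.conv_eq_zero sB sB
  have sφ : ∀ x, x (Fin.last n) < 0 → (A - B) x = 0 := fun x hx => by
    simp [sA x hx, sB x hx]
  have sψ₀ : ∀ x, x (Fin.last n) < 0 → ψ₀ x = 0 := fun x hx => by
    simp [ψ₀, sA x hx, sAA x hx]
  have sψ : ∀ x, x (Fin.last n) < 0 → ψ x = 0 := fun x hx => by
    simp [ψ, sA x hx, sB x hx, sAA x hx, sAB x hx, sBB x hx]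
  refine ⟨A, A - B, ψ₀, ψ, SchwartzMap.conv ψ₀ A, SchwartzMap.conv ψ (A - B),
    tsupport_subset_of_eq_zero sA, tsupport_subset_of_eq_zero sφ,
    tsupport_subset_of_eq_zero sψ₀, tsupport_subset_of_eq_zero sψ,
    mA.integral_eq, mψ₀.integral_eq, mφ.vanishingMoments, mψ.vanishingMoments, ?_,
    SchwartzMap.conv_apply _ _, SchwartzMap.conv_apply _ _,
    tsupport_subset_of_eq_zero (SchwartzMap.conv_eq_zero sψ₀ sA),
    tsupport_subset_of_eq_zero (SchwartzMap.conv_eq_zero sψ sφ),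
    mk₀.integral_eq, mk.vanishingMoments, ?_⟩
  · intro u η c hc
    refine tendsto_sum_anisoDil ha mk₀.integral_eq u η c fun j x => ?_
    simp only [hc, integral_anisoDil_mul_anisoDil, hk]
  · intro u η c hc
    refine tendsto_sum_anisoDil ha mk₀.integral_eq u η c fun j x => ?_
    rw [hc, hk]

end
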